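/- Let G be a finite simple graph with n vertices and e edges, minimum degree δ ≥ 1, maximum degree Δ, and independence number β. Then Inv(G) ≥ (n − β)/Δ + (2β²δ² − e²)/(β·Δ³), with equality if and only if G is a regular balanced bipartite graph. -/

import Mathlib

open Finset

/-- The first Zagreb index of a graph: the sum of the squares of the vertex degrees. -/
def zagreb1 {V : Type*} [Fintype V] (G : SimpleGraph V) [DecidableRel G.Adj] : ℝ :=
  ∑ u, (G.degree u : ℝ) ^ 2

/-- The forgotten topological index of a graph: the sum of the cubes of the vertex degrees. -/
def forgottenIndex {V : Type*} [Fintype V] (G : SimpleGraph V) [DecidableRel G.Adj] : ℝ :=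
  ∑ u, (G.degree u : ℝ) ^ 3

/-- The inverse degree of a graph: the sum of the reciprocals of the vertex degrees. -/
noncomputable def invDegree {V : Type*} [Fintype V] (G : SimpleGraph V) [DecidableRel G.Adj] : ℝ :=
  ∑ u, 1 / (G.degree u : ℝ)

/-- The independence number of a graph: the largest cardinality of a set of pairwise
nonadjacent vertices. -/
noncomputable def indepNum {V : Type*} [Fintype V] (G : SimpleGraph V) : ℕ :=
  sSup {k | ∃ s : Finset V, s.card = k ∧ ∀ u ∈ s, ∀ v ∈ s, ¬ G.Adj u v}

/-- A graph is a regular balanced bipartite graph if its vertices can be partitioned into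
two parts of equal size with every edge joining the two parts, and all vertices have the
same degree. -/
def IsRegularBalancedBipartite {V : Type*} [Fintype V] (G : SimpleGraph V) [DecidableRel G.Adj] : Prop :=
  ∃ (A : Finset V) (r : ℕ), 2 * A.card = Fintype.card V ∧
    (∀ u v, G.Adj u v → (u ∈ A ↔ v ∉ A)) ∧ G.IsRegularOfDegree r

/-- A graph is `k`-connected if it has more than `k` vertices and removing any set of
fewer than `k` vertices leaves a connected graph. -/
def IsKConnected {V : Type*} [Fintype V] (G : SimpleGraph V) (k : ℕ) : Prop :=
  k < Fintype.card V ∧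
    ∀ S : Finset V, S.card < k → (G.induce (↑S : Set V)ᶜ).Connected

/-- A graph is traceable if it has a Hamiltonian path. -/
def IsTraceable {V : Type*} [DecidableEq V] (G : SimpleGraph V) : Prop :=
  ∃ (u v : V) (p : G.Walk u v), p.IsHamiltonian

section IndependentSets

variable {V : Type*} [Fintype V] (G : SimpleGraph V)

/-- The independence number is attained by an independent set. -/
theorem exists_card_eq_indepNum :
    ∃ s : Finset V, s.card = indepNum G ∧ ∀ u ∈ s, ∀ v ∈ s, ¬ G.Adj u v :=
  Nat.sSup_mem (s := {k | ∃ s : Finset V, s.card = k ∧ ∀ u ∈ s, ∀ v ∈ s, ¬ G.Adj u v})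
    ⟨0, ∅, by simp⟩ ⟨Fintype.card V, by rintro _ ⟨s, rfl, -⟩; exact s.card_le_univ⟩

theorem card_le_indepNum {s : Finset V} (hs : ∀ u ∈ s, ∀ v ∈ s, ¬ G.Adj u v) :
    s.card ≤ indepNum G :=
  le_csSup ⟨Fintype.card V, by rintro _ ⟨s, rfl, -⟩; exact s.card_le_univ⟩ ⟨s, rfl, hs⟩

theorem indepNum_pos [Nonempty V] : 0 < indepNum G := by
  obtain ⟨v⟩ := ‹Nonempty V›
  exact card_le_indepNum G (s := {v}) (by simp)

variable [DecidableRel G.Adj]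

theorem nonempty_of_one_le_minDegree (hδ : 1 ≤ G.minDegree) : Nonempty V := by
  by_contra hV
  rw [not_nonempty_iff] at hV
  simp at hδ

theorem card_filter_adj_le_degree (s : Finset V) (v : V) :
    (s.filter fun u => G.Adj u v).card ≤ G.degree v := by
  rw [← G.card_neighborFinset_eq_degree]
  exact card_le_card fun u hu => by simpa using (mem_filter.1 hu).2.symm

theorem card_div_maxDegree_le_invDegree (hδ : 1 ≤ G.minDegree) :
    (Fintype.card V : ℝ) / G.maxDegree ≤ invDegree G := by
  have h : ∀ u ∈ (univ : Finset V), 1 / (G.maxDegree : ℝ) ≤ 1 / (G.degree u : ℝ) := fun u _ =>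
    one_div_le_one_div_of_le (by exact_mod_cast hδ.trans (G.minDegree_le_degree u))
      (by exact_mod_cast G.degree_le_maxDegree u)
  have := card_nsmul_le_sum _ _ _ h
  rwa [nsmul_eq_mul, mul_one_div, card_univ] at this

variable [DecidableEq V]

/-- Double counting of the edges that leave an independent set. -/
theorem sum_degree_eq_sum_compl_card {s : Finset V} (hs : ∀ u ∈ s, ∀ v ∈ s, ¬ G.Adj u v) :
    ∑ u ∈ s, G.degree u = ∑ v ∈ sᶜ, (s.filter fun u => G.Adj u v).card := by
  have h := sum_card_bipartiteAbove_eq_sum_card_bipartiteBelow (s := s) (t := sᶜ) G.Adj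
  refine Eq.trans (sum_congr rfl fun u hu => ?_) h
  rw [← G.card_neighborFinset_eq_degree]
  congr 1
  ext v
  simp only [SimpleGraph.mem_neighborFinset, mem_bipartiteAbove, mem_compl]
  exact ⟨fun h => ⟨fun hv => hs u hu v hv h, h⟩, fun h => h.2⟩

theorem sum_degree_add_sum_compl_degree (s : Finset V) :
    ∑ u ∈ s, G.degree u + ∑ v ∈ sᶜ, G.degree v = 2 * G.edgeFinset.card := by
  rw [sum_add_sum_compl, G.sum_degrees_eq_twice_card_edges]

theorem sum_degree_le_card_edgeFinset {s : Finset V} (hs : ∀ u ∈ s, ∀ v ∈ s, ¬ G.Adj u v) :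
    ∑ u ∈ s, G.degree u ≤ G.edgeFinset.card := by
  have h₁ := sum_degree_eq_sum_compl_card G hs
  have h₂ : ∑ v ∈ sᶜ, (s.filter fun u => G.Adj u v).card ≤ ∑ v ∈ sᶜ, G.degree v :=
    sum_le_sum fun v _ => card_filter_adj_le_degree G s v
  have h₃ := sum_degree_add_sum_compl_degree G s
  omega

/-- If the degrees in an independent set add up to the number of edges, then its complement
is independent too. -/
theorem compl_independent_of_sum_degree_eq {s : Finset V}
    (hs : ∀ u ∈ s, ∀ v ∈ s, ¬ G.Adj u v) (he : ∑ u ∈ s, G.degree u = G.edgeFinset.card) :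
    ∀ u ∉ s, ∀ v ∉ s, ¬ G.Adj u v := by
  intro u hu v hv huv
  have h₁ := sum_degree_eq_sum_compl_card G hs
  have h₂ : ∑ v ∈ sᶜ, (s.filter fun u => G.Adj u v).card < ∑ v ∈ sᶜ, G.degree v := by
    refine sum_lt_sum (fun v _ => card_filter_adj_le_degree G s v) ⟨v, mem_compl.2 hv, ?_⟩
    rw [← G.card_neighborFinset_eq_degree]
    refine card_lt_card ⟨fun w hw => by simpa using (mem_filter.1 hw).2.symm, fun h => hu ?_⟩
    exact (mem_filter.1 (h (by simpa using huv.symm : u ∈ G.neighborFinset v))).1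
  have h₃ := sum_degree_add_sum_compl_degree G s
  omega

theorem indepNum_mul_minDegree_le : indepNum G * G.minDegree ≤ G.edgeFinset.card := by
  obtain ⟨s, hs, hI⟩ := exists_card_eq_indepNum G
  refine le_trans ?_ (sum_degree_le_card_edgeFinset G hI)
  rw [← hs, ← smul_eq_mul]
  exact card_nsmul_le_sum s _ _ fun u _ => G.minDegree_le_degree u

theorem IsRegularBalancedBipartite.two_mul_indepNum {G : SimpleGraph V} [DecidableRel G.Adj]
    (h : IsRegularBalancedBipartite G) (hδ : 1 ≤ G.minDegree) :
    2 * indepNum G = Fintype.card V := by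
  obtain ⟨A, r, hA, hadj, hr⟩ := h
  have hle : A.card ≤ indepNum G :=
    card_le_indepNum G fun u hu v hv huv => (hadj u v huv).1 hu hv
  obtain ⟨s, hs, hI⟩ := exists_card_eq_indepNum G
  have hsum := sum_degree_le_card_edgeFinset G hI
  have htwo := G.sum_degrees_eq_twice_card_edges
  have hV := nonempty_of_one_le_minDegree G hδ
  have hpos : 0 < r := by
    obtain ⟨v⟩ := hV
    rw [← hr v]
    exact hδ.trans (G.minDegree_le_degree v)
  simp only [hr.degree_eq, sum_const, smul_eq_mul, card_univ, hs] at hsum htwo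
  have : 2 * indepNum G ≤ Fintype.card V := by
    refine Nat.le_of_mul_le_mul_right ?_ hpos
    rw [htwo, mul_assoc]
    exact Nat.mul_le_mul_left 2 hsum
  omega

end IndependentSets

/-- The bound falls short of `n / D` by an explicit sum of nonnegative terms. -/
theorem bound_eq_div_sub {n b d D e : ℝ} (hb : b ≠ 0) (hD : D ≠ 0) :
    (n - b) / D + (2 * b ^ 2 * d ^ 2 - e ^ 2) / (b * D ^ 3)
      = n / D - (b ^ 2 * (D ^ 2 - d ^ 2) + (e ^ 2 - (b * d) ^ 2)) / (b * D ^ 3) := by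
  field_simp
  ring

/-- For a graph `G` with `n` vertices, `e` edges, minimum degree `δ ≥ 1`, maximum degree `Δ`,
and independence number `β`: `Inv(G) ≥ (n − β)/Δ + (2β²δ² − e²)/(βΔ³)`, with equality iff
`G` is a regular balanced bipartite graph. -/
theorem stmt4 {V : Type*} [Fintype V] [DecidableEq V] (G : SimpleGraph V) [DecidableRel G.Adj]
    (hδ : 1 ≤ G.minDegree) :
    invDegree G ≥ ((Fintype.card V : ℝ) - indepNum G) / (G.maxDegree : ℝ)
        + (2 * (indepNum G : ℝ) ^ 2 * (G.minDegree : ℝ) ^ 2 - (G.edgeFinset.card : ℝ) ^ 2)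
          / ((indepNum G : ℝ) * (G.maxDegree : ℝ) ^ 3) ∧
    (invDegree G = ((Fintype.card V : ℝ) - indepNum G) / (G.maxDegree : ℝ)
        + (2 * (indepNum G : ℝ) ^ 2 * (G.minDegree : ℝ) ^ 2 - (G.edgeFinset.card : ℝ) ^ 2)
          / ((indepNum G : ℝ) * (G.maxDegree : ℝ) ^ 3)
      ↔ IsRegularBalancedBipartite G) := by
  have hV := nonempty_of_one_le_minDegree G hδ
  have hb : (0 : ℝ) < indepNum G := by exact_mod_cast indepNum_pos G
  have hδ' : (0 : ℝ) < G.minDegree := by exact_mod_cast hδ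
  have hδΔ : (G.minDegree : ℝ) ≤ G.maxDegree := by exact_mod_cast G.minDegree_le_maxDegree
  have hΔ : (0 : ℝ) < G.maxDegree := hδ'.trans_le hδΔ
  have he : (indepNum G : ℝ) * G.minDegree ≤ G.edgeFinset.card := by
    exact_mod_cast indepNum_mul_minDegree_le G
  have hInv := card_div_maxDegree_le_invDegree G hδ
  have hden : (0 : ℝ) < (indepNum G : ℝ) * (G.maxDegree : ℝ) ^ 3 := by positivity
  have hgap₁ : 0 ≤ (indepNum G : ℝ) ^ 2 * ((G.maxDegree : ℝ) ^ 2 - (G.minDegree : ℝ) ^ 2) :=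
    mul_nonneg (by positivity) (sub_nonneg.2 (by gcongr))
  have hgap₂ : 0 ≤ (G.edgeFinset.card : ℝ) ^ 2 - ((indepNum G : ℝ) * G.minDegree) ^ 2 :=
    sub_nonneg.2 (by gcongr)
  have hgap := div_nonneg (add_nonneg hgap₁ hgap₂) hden.le
  rw [bound_eq_div_sub hb.ne' hΔ.ne']
  refine ⟨by linarith, fun heq => ?_, fun hG => ?_⟩
  · have hzero := (div_eq_zero_iff.1 (le_antisymm (by linarith) hgap)).resolve_right hden.ne'
    have hdeg : G.minDegree = G.maxDegree := by
      have h := (mul_eq_zero.1 (by linarith : (indepNum G : ℝ) ^ 2 *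
        ((G.maxDegree : ℝ) ^ 2 - (G.minDegree : ℝ) ^ 2) = 0)).resolve_left (by positivity)
      exact_mod_cast ((sq_eq_sq₀ hΔ.le hδ'.le).1 (sub_eq_zero.1 h)).symm
    have hedge : G.edgeFinset.card = indepNum G * G.minDegree := by
      have h := (sq_eq_sq₀ (by positivity) (by positivity)).1
        (sub_eq_zero.1 (by linarith : (G.edgeFinset.card : ℝ) ^ 2 -
          ((indepNum G : ℝ) * G.minDegree) ^ 2 = 0))
      exact_mod_cast h
    have hreg : G.IsRegularOfDegree G.minDegree := fun v =>
      le_antisymm (hdeg ▸ G.degree_le_maxDegree v) (G.minDegree_le_degree v)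
    obtain ⟨s, hs, hI⟩ := exists_card_eq_indepNum G
    have hcompl := compl_independent_of_sum_degree_eq G hI (by
      simp only [hreg.degree_eq, sum_const, smul_eq_mul, hs, hedge])
    refine ⟨s, G.minDegree, ?_, fun u v huv => ⟨fun hu hv => hI u hu v hv huv, fun hv => ?_⟩, hreg⟩
    · have htwo := G.sum_degrees_eq_twice_card_edges
      simp only [hreg.degree_eq, sum_const, smul_eq_mul, card_univ] at htwo
      rw [hedge, ← mul_assoc] at htwo
      rw [hs]
      exact (Nat.eq_of_mul_eq_mul_right hδ htwo).symm
    · by_contra hu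
      exact hcompl u hu v hv huv
  · have hcard := hG.two_mul_indepNum hδ
    obtain ⟨A, r, -, -, hreg⟩ := hG
    have hmin : G.minDegree = r := hreg.minDegree_eq
    have hmax : G.maxDegree = r := hreg.maxDegree_eq
    have hedge : G.edgeFinset.card = indepNum G * r := by
      have htwo := G.sum_degrees_eq_twice_card_edges
      simp only [hreg.degree_eq, sum_const, smul_eq_mul, card_univ] at htwo
      rw [← hcard, mul_assoc] at htwo
      exact (Nat.eq_of_mul_eq_mul_left two_pos htwo).symm
    simp [invDegree, hreg.degree_eq, hmin, hmax, hedge, div_eq_mul_inv]
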